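/- arXiv:2605.25837 — 9 statements merged into one kernel-verified Lean document; each statement's English description precedes it below -/
import Mathlib

section
/- Let X be a nonempty closed convex subset of ℝ^n, x ∈ ℝ^n, v ∈ ℝ^n, and t₁ ≥ t₂ > 0. Then ‖x − P_X(x − t₁ v)‖ / t₁ ≤ ‖x − P_X(x − t₂ v)‖ / t₂, and ‖x − P_X(x − t₂ v)‖ ≤ ‖x − P_X(x − t₁ v)‖. -/
/-!
Put `a = x - P (x - t₁ v)` and `b = x - P (x - t₂ v)`. Testing the variational inequality of each
projection against the other projected point gives `⟪a - t₁ v, a - b⟫ ≤ 0` and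
`⟪b - t₂ v, b - a⟫ ≤ 0`. In the combination with weights `t₂` and `t₁` the vector `v` cancels, and
Cauchy–Schwarz turns the result into `(‖a‖ - ‖b‖) (t₂ ‖a‖ - t₁ ‖b‖) ≤ 0`. Since `t₂ ≤ t₁`, this
forces `‖b‖ ≤ ‖a‖` and `t₂ ‖a‖ ≤ t₁ ‖b‖`.
-/

open scoped RealInnerProductSpace

/-- For a nonempty closed convex X ⊆ ℝ^n, x, v ∈ ℝ^n and t₁ ≥ t₂ > 0,
‖x − P_X(x − t₁ v)‖ / t₁ ≤ ‖x − P_X(x − t₂ v)‖ / t₂ and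
‖x − P_X(x − t₂ v)‖ ≤ ‖x − P_X(x − t₁ v)‖. -/
theorem projection_step_monotone {n : ℕ} (X : Set (EuclideanSpace ℝ (Fin n)))
    (hXne : X.Nonempty) (hXclosed : IsClosed X) (hXconv : Convex ℝ X)
    (P : EuclideanSpace ℝ (Fin n) → EuclideanSpace ℝ (Fin n))
    (hPmem : ∀ z, P z ∈ X)
    (hPchar : ∀ z, ∀ y ∈ X, ⟪z - P z, y - P z⟫ ≤ 0)
    (x v : EuclideanSpace ℝ (Fin n))
    (t₁ t₂ : ℝ) (ht₂ : 0 < t₂) (ht : t₂ ≤ t₁) :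
    ‖x - P (x - t₁ • v)‖ / t₁ ≤ ‖x - P (x - t₂ • v)‖ / t₂ ∧
      ‖x - P (x - t₂ • v)‖ ≤ ‖x - P (x - t₁ • v)‖ := by
  have ht₁ : 0 < t₁ := ht₂.trans_le ht
  have h1 := hPchar (x - t₁ • v) _ (hPmem (x - t₂ • v))
  have h2 := hPchar (x - t₂ • v) _ (hPmem (x - t₁ • v))
  obtain ⟨a, ha⟩ : ∃ a, a = x - P (x - t₁ • v) := ⟨_, rfl⟩
  obtain ⟨b, hb⟩ : ∃ b, b = x - P (x - t₂ • v) := ⟨_, rfl⟩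
  rw [show x - t₁ • v - P (x - t₁ • v) = a - t₁ • v by rw [ha]; abel,
    show P (x - t₂ • v) - P (x - t₁ • v) = a - b by rw [ha, hb]; abel] at h1
  rw [show x - t₂ • v - P (x - t₂ • v) = b - t₂ • v by rw [hb]; abel,
    show P (x - t₁ • v) - P (x - t₂ • v) = b - a by rw [ha, hb]; abel] at h2
  rw [← ha, ← hb]
  simp only [inner_sub_left, inner_sub_right, real_inner_smul_left,
    real_inner_self_eq_norm_sq, real_inner_comm a b] at h1 h2
  have hcs := real_inner_le_norm a b
  rw [real_inner_comm] at hcs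
  have hA := norm_nonneg a
  have hB := norm_nonneg b
  have key : (‖a‖ - ‖b‖) * (t₂ * ‖a‖ - t₁ * ‖b‖) ≤ 0 := by
    have e1 := mul_le_mul_of_nonneg_left h1 ht₂.le
    have e2 := mul_le_mul_of_nonneg_left h2 ht₁.le
    have e3 := mul_le_mul_of_nonneg_left hcs (add_pos ht₁ ht₂).le
    simp only [real_inner_comm a b] at e1 e2 e3
    linarith
  have hba : ‖b‖ ≤ ‖a‖ := by
    by_contra! h
    have h3 : t₂ * ‖a‖ < t₁ * ‖b‖ := by nlinarith
    nlinarith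
  refine ⟨?_, hba⟩
  rw [div_le_div_iff₀ ht₁ ht₂]
  rcases hba.eq_or_lt with h | h
  · rw [h]; exact mul_le_mul_of_nonneg_left ht hA
  · by_contra! h3
    nlinarith
end

section
/- Let X be a nonempty closed convex subset of ℝ^n, G : ℝ^n → ℝ^n an L-Lipschitz map with L > 0, and let γ > 0, ρ ∈ (0,1), μ > 0. Let x ∈ ℝ^n and t ∈ (0, γ]. Suppose that either t = γ, or else, setting ŷ := P_X(x − t ρ^{-1} G(x)), one has ŷ ≠ x and t ρ^{-1} ‖G(x) − G(ŷ)‖ > μ ‖x − ŷ‖ (the line search failed at step size t/ρ). Then t ≥ min{ρμ/L, γ}. -/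
/-!
If `t = γ` the bound is immediate. Otherwise the test failed at the step `t / ρ` with trial point
`y ≠ x`, so Lipschitz continuity gives `μ ‖x - y‖ < (t / ρ) L ‖x - y‖`; cancelling the positive
factor `‖x - y‖` yields `ρ μ / L < t`.
-/

open scoped RealInnerProductSpace

/-- For X nonempty closed convex, G an L-Lipschitz map (L > 0), γ > 0,
ρ ∈ (0,1), μ > 0, x ∈ ℝ^n and t ∈ (0, γ]: if either t = γ, or else with
ŷ := P_X(x − t ρ⁻¹ G(x)) one has ŷ ≠ x and t ρ⁻¹ ‖G(x) − G(ŷ)‖ > μ ‖x − ŷ‖,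
then t ≥ min{ρμ/L, γ}. -/
theorem stepsize_lower_bound {n : ℕ} (X : Set (EuclideanSpace ℝ (Fin n)))
    (hXne : X.Nonempty) (hXclosed : IsClosed X) (hXconv : Convex ℝ X)
    (P : EuclideanSpace ℝ (Fin n) → EuclideanSpace ℝ (Fin n))
    (hPmem : ∀ z, P z ∈ X)
    (hPchar : ∀ z, ∀ y ∈ X, ⟪z - P z, y - P z⟫ ≤ 0)
    (G : EuclideanSpace ℝ (Fin n) → EuclideanSpace ℝ (Fin n))
    (L : ℝ) (hL : 0 < L) (hGLip : ∀ u w, ‖G u - G w‖ ≤ L * ‖u - w‖)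
    (γ ρ μ : ℝ) (hγ : 0 < γ) (hρ : ρ ∈ Set.Ioo (0 : ℝ) 1) (hμ : 0 < μ)
    (x : EuclideanSpace ℝ (Fin n)) (t : ℝ) (ht0 : 0 < t) (htγ : t ≤ γ)
    (hcase : t = γ ∨
      (P (x - (t * ρ⁻¹) • G x) ≠ x ∧
        μ * ‖x - P (x - (t * ρ⁻¹) • G x)‖ <
          t * ρ⁻¹ * ‖G x - G (P (x - (t * ρ⁻¹) • G x))‖)) :
    min (ρ * μ / L) γ ≤ t := by
  obtain ⟨hρ0, -⟩ := hρ
  rcases hcase with h | ⟨hne, h⟩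
  · exact h ▸ min_le_right _ _
  · refine (min_le_left _ _).trans ?_
    generalize P (x - (t * ρ⁻¹) • G x) = y at hne h
    have hd : 0 < ‖x - y‖ := norm_pos_iff.2 (sub_ne_zero.2 hne.symm)
    have hs : 0 < t * ρ⁻¹ := by positivity
    -- The Lipschitz bound turns the failed test into `μ < (t / ρ) * L`
    -- after cancelling `‖x - y‖`.
    have h1 : μ * ‖x - y‖ < t * ρ⁻¹ * L * ‖x - y‖ := by
      calc μ * ‖x - y‖ < t * ρ⁻¹ * ‖G x - G y‖ := h
        _ ≤ t * ρ⁻¹ * (L * ‖x - y‖) := mul_le_mul_of_nonneg_left (hGLip x y) hs.le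
        _ = t * ρ⁻¹ * L * ‖x - y‖ := by ring
    have h2 : μ < t * ρ⁻¹ * L := lt_of_mul_lt_mul_right h1 hd.le
    rw [div_le_iff₀ hL]
    calc ρ * μ ≤ ρ * (t * ρ⁻¹ * L) := mul_le_mul_of_nonneg_left h2.le hρ0.le
      _ = t * L := by field_simp
end

section
/- Let X be a nonempty closed convex subset of ℝ^n and H : ℝ^n → ℝ^n a map that is pseudomonotone on X. Let x* ∈ X satisfy ⟨H(x*), x − x*⟩ ≥ 0 for all x ∈ X. Let γ ∈ (0,1], μ ∈ (0, √3/3), t ∈ (0, γ], and let x_k, ε₁, ε₂, ε₃ ∈ ℝ^n. Define y_half := P_X(x_k − t(H(x_k) + ε₁)) and y_next := P_X(x_k − t(H(y_half) + ε₂)), and assume the line-search condition t‖(H(x_k) + ε₁) − (H(y_half) + ε₃)‖ ≤ μ ‖x_k − y_half‖. Then, with r_γ(x_k) := ‖P_X(x_k − γ H(x_k)) − x_k‖, one has ‖y_next − x*‖² ≤ ‖x_k − x*‖² − ((1 − 3μ²) t² / (2γ²)) · r_γ(x_k)² + (1 − 3μ²) γ² ‖ε₁‖² + 3γ² ‖ε₂‖²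 + 3γ² ‖ε₃‖² + 2⟨t ε₂, x* − y_half⟩. -/
open scoped RealInnerProductSpace

/-!
The argument is the extragradient (Korpelevich) estimate with perturbed operator values.
The variational inequalities of the two projections, together with
`⟪H yhalf, yhalf - xstar⟫ ≥ 0` (pseudomonotonicity), give
`‖ynext - xstar‖² ≤ ‖xk - xstar‖² - ‖xk - yhalf‖² + t² ‖(H xk + ε₁) - (H yhalf + ε₂)‖²
  + 2 ⟪t • ε₂, xstar - yhalf⟫`.
Writing the difference of operator values as the line-search difference plus `ε₃ - ε₂` bounds
its squared norm by a three-term inequality, leaving `-(1 - 3 μ²) ‖xk - yhalf‖²`.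
That quantity is compared with the residual in two steps: the ratio `‖x - P (x - s • h)‖ / s` is
nonincreasing in `s > 0` (`residual_scale`), which passes from `γ` to `t`, and `P` is nonexpansive
(`proj_nonexpansive`), which absorbs `ε₁`. Neither step needs `xk ∈ X`.
-/

section Projection

variable {E : Type*} [NormedAddCommGroup E] [InnerProductSpace ℝ E]

lemma proj_nonexpansive {X : Set E} {P : E → E} (hPmem : ∀ z, P z ∈ X)
    (hPchar : ∀ z, ∀ y ∈ X, ⟪z - P z, y - P z⟫ ≤ 0) (z w : E) :
    ‖P z - P w‖ ≤ ‖z - w‖ := by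
  have h1 := hPchar z (P w) (hPmem w)
  have h2 := hPchar w (P z) (hPmem z)
  have key : ‖P z - P w‖ ^ 2 ≤ ⟪z - w, P z - P w⟫ := by
    have : ⟪z - w, P z - P w⟫ - ⟪P z - P w, P z - P w⟫
        = -⟪z - P z, P w - P z⟫ - ⟪w - P w, P z - P w⟫ := by
      simp only [inner_sub_left, inner_sub_right]; ring
    rw [real_inner_self_eq_norm_sq] at this
    linarith
  have hcs := real_inner_le_norm (z - w) (P z - P w)
  by_contra! hlt
  nlinarith [norm_nonneg (z - w)]

/-- The ratio `‖x - P (x - s • h)‖ / s` is nonincreasing in `s`, for an arbitrary base point `x`,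
stated without division. -/
lemma residual_scale {X : Set E} {P : E → E} (hPmem : ∀ z, P z ∈ X)
    (hPchar : ∀ z, ∀ y ∈ X, ⟪z - P z, y - P z⟫ ≤ 0) (x h : E) {t γ : ℝ}
    (ht : 0 < t) (htγ : t ≤ γ) :
    t * ‖P (x - γ • h) - x‖ ≤ γ * ‖P (x - t • h) - x‖ := by
  have h1 := hPchar (x - γ • h) _ (hPmem (x - t • h))
  have h2 := hPchar (x - t • h) _ (hPmem (x - γ • h))
  set a := P (x - γ • h)
  set b := P (x - t • h)
  -- Adding the variational inequalities with weights `t` and `γ` eliminates `h`.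
  have key : t * ‖a - x‖ ^ 2 + γ * ‖b - x‖ ^ 2 ≤ (t + γ) * ⟪a - x, b - x⟫ := by
    have : t * ⟪a - x, a - x⟫ + γ * ⟪b - x, b - x⟫ - (t + γ) * ⟪a - x, b - x⟫
        = t * ⟪x - γ • h - a, b - a⟫ + γ * ⟪x - t • h - b, a - b⟫ := by
      simp only [inner_sub_left, inner_sub_right, real_inner_smul_left]
      rw [real_inner_comm b a, real_inner_comm x a, real_inner_comm x b]; ring
    rw [real_inner_self_eq_norm_sq, real_inner_self_eq_norm_sq] at this
    nlinarith
  have hcs := real_inner_le_norm (a - x) (b - x)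
  have key2 : (t * ‖a - x‖ - γ * ‖b - x‖) * (‖a - x‖ - ‖b - x‖) ≤ 0 := by
    nlinarith
  by_contra! hlt
  have : ‖b - x‖ < ‖a - x‖ := by
    by_contra! hle
    nlinarith [norm_nonneg (b - x)]
  nlinarith [mul_pos (sub_pos.2 hlt) (sub_pos.2 this)]

lemma norm_add_sub_sq_le {E : Type*} [NormedAddCommGroup E] (u v w : E) :
    ‖u + v - w‖ ^ 2 ≤ 3 * (‖u‖ ^ 2 + ‖v‖ ^ 2 + ‖w‖ ^ 2) := by
  have h : ‖u + v - w‖ ≤ ‖u‖ + ‖v‖ + ‖w‖ :=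
    (norm_sub_le _ _).trans (by gcongr; exact norm_add_le _ _)
  have h2 : ‖u + v - w‖ ^ 2 ≤ (‖u‖ + ‖v‖ + ‖w‖) ^ 2 := by gcongr
  nlinarith [sq_nonneg (‖u‖ - ‖v‖), sq_nonneg (‖u‖ - ‖w‖), sq_nonneg (‖v‖ - ‖w‖)]

/-- The one-step extragradient estimate, for arbitrary operator values `g` (prediction) and
`f + e` (correction), where `f` satisfies the Minty-type inequality `0 ≤ ⟪f, y - p⟫`. The
hypotheses `hy` and `hzp` are instances of the projection inequalities for
`y = P (x - t • g)` and `z = P (x - t • (f + e))`. -/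
lemma extragradient_step {x y z p f g e : E} {t : ℝ} (ht : 0 < t)
    (hy : ⟪x - t • g - y, z - y⟫ ≤ 0) (hzp : ⟪x - t • (f + e) - z, p - z⟫ ≤ 0)
    (hf : 0 ≤ ⟪f, y - p⟫) :
    ‖z - p‖ ^ 2 ≤ ‖x - p‖ ^ 2 - ‖x - y‖ ^ 2 + t ^ 2 * ‖g - (f + e)‖ ^ 2
      + 2 * ⟪t • e, p - y⟫ := by
  have hsq : 0 ≤ ‖t • (g - (f + e)) - (z - y)‖ ^ 2 := sq_nonneg _
  have hident : ‖x - p‖ ^ 2 - ‖x - y‖ ^ 2 + ‖t • (g - (f + e))‖ ^ 2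
      + 2 * ⟪t • e, p - y⟫ - ‖z - p‖ ^ 2
      = ‖t • (g - (f + e)) - (z - y)‖ ^ 2 - 2 * ⟪x - t • g - y, z - y⟫
        - 2 * ⟪x - t • (f + e) - z, p - z⟫ + 2 * (t * ⟪f, y - p⟫) := by
    simp only [← real_inner_self_eq_norm_sq, inner_sub_left, inner_sub_right, inner_add_left,
      inner_add_right, real_inner_smul_left, real_inner_smul_right, smul_add, smul_sub]
    simp only [real_inner_comm]
    ring
  have hnorm : ‖t • (g - (f + e))‖ ^ 2 = t ^ 2 * ‖g - (f + e)‖ ^ 2 := by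
    rw [norm_smul, mul_pow, Real.norm_eq_abs, sq_abs]
  have := mul_nonneg ht.le hf
  linarith

end Projection

/-- Key recursion with residual function (Lemma 5 of the paper). -/
theorem recursion_with_residual {n : ℕ} (X : Set (EuclideanSpace ℝ (Fin n)))
    (hXne : X.Nonempty) (hXclosed : IsClosed X) (hXconv : Convex ℝ X)
    (P : EuclideanSpace ℝ (Fin n) → EuclideanSpace ℝ (Fin n))
    (hPmem : ∀ z, P z ∈ X)
    (hPchar : ∀ z, ∀ y ∈ X, ⟪z - P z, y - P z⟫ ≤ 0)
    (H : EuclideanSpace ℝ (Fin n) → EuclideanSpace ℝ (Fin n))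
    (hpseudo : ∀ x ∈ X, ∀ y ∈ X, 0 ≤ ⟪H x, y - x⟫ → 0 ≤ ⟪H y, y - x⟫)
    (xstar : EuclideanSpace ℝ (Fin n)) (hxstar : xstar ∈ X)
    (hsol : ∀ x ∈ X, 0 ≤ ⟪H xstar, x - xstar⟫)
    (γ μ t : ℝ) (hγ : 0 < γ) (hγ1 : γ ≤ 1)
    (hμ0 : 0 < μ) (hμ : μ < Real.sqrt 3 / 3)
    (ht0 : 0 < t) (htγ : t ≤ γ)
    (xk ε₁ ε₂ ε₃ : EuclideanSpace ℝ (Fin n))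
    (yhalf ynext : EuclideanSpace ℝ (Fin n))
    (hyhalf : yhalf = P (xk - t • (H xk + ε₁)))
    (hynext : ynext = P (xk - t • (H yhalf + ε₂)))
    (hls : t * ‖(H xk + ε₁) - (H yhalf + ε₃)‖ ≤ μ * ‖xk - yhalf‖) :
    ‖ynext - xstar‖ ^ 2 ≤ ‖xk - xstar‖ ^ 2
      - ((1 - 3 * μ ^ 2) * t ^ 2 / (2 * γ ^ 2)) * ‖P (xk - γ • H xk) - xk‖ ^ 2
      + (1 - 3 * μ ^ 2) * γ ^ 2 * ‖ε₁‖ ^ 2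
      + 3 * γ ^ 2 * ‖ε₂‖ ^ 2 + 3 * γ ^ 2 * ‖ε₃‖ ^ 2
      + 2 * ⟪t • ε₂, xstar - yhalf⟫ := by
  have hyX : yhalf ∈ X := hyhalf ▸ hPmem _
  have hzX : ynext ∈ X := hynext ▸ hPmem _
  have hy : ⟪xk - t • (H xk + ε₁) - yhalf, ynext - yhalf⟫ ≤ 0 := by
    have := hPchar (xk - t • (H xk + ε₁)) ynext hzX
    rwa [← hyhalf] at this
  have hz : ⟪xk - t • (H yhalf + ε₂) - ynext, xstar - ynext⟫ ≤ 0 := by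
    have := hPchar (xk - t • (H yhalf + ε₂)) xstar hxstar
    rwa [← hynext] at this
  have hstep := extragradient_step ht0 hy hz (hpseudo xstar hxstar yhalf hyX (hsol yhalf hyX))
  have hμ3 : 0 ≤ 1 - 3 * μ ^ 2 := by
    have h3 : Real.sqrt 3 ^ 2 = 3 := Real.sq_sqrt (by norm_num)
    nlinarith [Real.sqrt_nonneg 3]
  have hls2 : t ^ 2 * ‖(H xk + ε₁) - (H yhalf + ε₃)‖ ^ 2 ≤ μ ^ 2 * ‖xk - yhalf‖ ^ 2 := by
    rw [← mul_pow, ← mul_pow]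
    gcongr
  have htγ2 : t ^ 2 ≤ γ ^ 2 := by gcongr
  have hdiff : t ^ 2 * ‖(H xk + ε₁) - (H yhalf + ε₂)‖ ^ 2
      ≤ 3 * μ ^ 2 * ‖xk - yhalf‖ ^ 2 + 3 * γ ^ 2 * ‖ε₂‖ ^ 2 + 3 * γ ^ 2 * ‖ε₃‖ ^ 2 := by
    have h := norm_add_sub_sq_le ((H xk + ε₁) - (H yhalf + ε₃)) ε₃ ε₂
    rw [show (H xk + ε₁) - (H yhalf + ε₃) + ε₃ - ε₂ = (H xk + ε₁) - (H yhalf + ε₂) by abel] at h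
    have h' := mul_le_mul_of_nonneg_left h (sq_nonneg t)
    have e2 := mul_le_mul_of_nonneg_right htγ2 (sq_nonneg ‖ε₂‖)
    have e3 := mul_le_mul_of_nonneg_right htγ2 (sq_nonneg ‖ε₃‖)
    linarith
  have hres : t ^ 2 / (2 * γ ^ 2) * ‖P (xk - γ • H xk) - xk‖ ^ 2
      ≤ ‖xk - yhalf‖ ^ 2 + γ ^ 2 * ‖ε₁‖ ^ 2 := by
    have hscale := residual_scale hPmem hPchar xk (H xk) ht0 htγ
    have hne : ‖P (xk - t • H xk) - yhalf‖ ≤ t * ‖ε₁‖ := by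
      have := proj_nonexpansive hPmem hPchar (xk - t • H xk) (xk - t • (H xk + ε₁))
      rwa [← hyhalf, show xk - t • H xk - (xk - t • (H xk + ε₁)) = t • ε₁ by
        rw [smul_add]; abel, norm_smul, Real.norm_of_nonneg ht0.le] at this
    have htri : ‖P (xk - t • H xk) - xk‖ ≤ t * ‖ε₁‖ + ‖xk - yhalf‖ := by
      have := norm_sub_le_norm_sub_add_norm_sub (P (xk - t • H xk)) yhalf xk
      rw [norm_sub_rev yhalf xk] at this
      linarith
    have hrt : ‖P (xk - t • H xk) - xk‖ ^ 2 ≤ 2 * (γ ^ 2 * ‖ε₁‖ ^ 2 + ‖xk - yhalf‖ ^ 2) := by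
      have h1 : ‖P (xk - t • H xk) - xk‖ ^ 2 ≤ (t * ‖ε₁‖ + ‖xk - yhalf‖) ^ 2 := by gcongr
      have e1 := mul_le_mul_of_nonneg_right htγ2 (sq_nonneg ‖ε₁‖)
      linarith [sq_nonneg (t * ‖ε₁‖ - ‖xk - yhalf‖)]
    have hsc2 : t ^ 2 * ‖P (xk - γ • H xk) - xk‖ ^ 2
        ≤ γ ^ 2 * ‖P (xk - t • H xk) - xk‖ ^ 2 := by
      rw [← mul_pow, ← mul_pow]
      gcongr
    rw [div_mul_eq_mul_div, div_le_iff₀ (by positivity)]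
    linarith [mul_le_mul_of_nonneg_left hrt (sq_nonneg γ)]
  have hfin := mul_le_mul_of_nonneg_left hres hμ3
  rw [← mul_assoc, ← mul_div_assoc] at hfin
  linarith
end

section
/- Let X be a nonempty closed convex subset of ℝ^n and H : ℝ^n → ℝ^n a map that is pseudomonotone on X. Let x* ∈ X satisfy ⟨H(x*), x − x*⟩ ≥ 0 for all x ∈ X. Let γ ∈ (0,1], μ ∈ (0, √3/3), t ∈ (0, γ], and let x_k, ε₁, ε₂, ε₃ ∈ ℝ^n. Define y_half := P_X(x_k − t(H(x_k) + ε₁)) and y_next := P_X(x_k − t(H(y_half) + ε₂)), and assume the line-search condition t‖(H(x_k) + ε₁) − (H(y_half) + ε₃)‖ ≤ μ ‖x_k − y_half‖. Then ‖y_next − x*‖² ≤ ‖x_k − x*‖² − (1 − 3μ²)‖x_k − y_half‖² + 3γ² ‖ε₂‖² + 3γ² ‖ε₃‖² + 2⟨t ε₂, x* − y_half⟩. -/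
open scoped RealInnerProductSpace

/-!
The extragradient estimate. Put the origin at `yhalf`, and write `u = xk - yhalf`,
`w = ynext - yhalf`, `q = xstar - yhalf`. The variational inequalities of the two projections
(tested at `xstar` and at `ynext`) and pseudomonotonicity (which gives `⟪H yhalf, q⟫ ≤ 0`) yield
`‖w - q‖² ≤ ‖u - q‖² - ‖u‖² - ‖w‖² + 2⟪v, w⟫ + 2⟪t ε₂, q⟫` with
`v = t (H xk + ε₁ - H yhalf - ε₂)`, and `2⟪v, w⟫ - ‖w‖² ≤ ‖v‖²`; this is `extragradient_core`.
Finally `v = t ((H xk + ε₁) - (H yhalf + ε₃)) + t ε₃ - t ε₂`, so `‖v‖²` is at most three times the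
sum of the squared norms of these terms, the first of which the line search bounds.
-/

/-- One extragradient step in coordinates centred at the half step: `u`, `w`, `q` are the previous
iterate, the new iterate and the solution, `a` and `b + e` the directions used by the first and
second projections, `e` being the error of the second. -/
lemma extragradient_core {E : Type*} [NormedAddCommGroup E] [InnerProductSpace ℝ E]
    (u w q a b e : E) (t : ℝ) (ht : 0 < t)
    (h₁ : ⟪u - t • (b + e) - w, q - w⟫ ≤ 0) (h₂ : ⟪u - t • a, w⟫ ≤ 0) (h₃ : ⟪b, q⟫ ≤ 0) :
    ‖w - q‖ ^ 2 ≤ ‖u - q‖ ^ 2 - ‖u‖ ^ 2 + ‖t • (a - b - e)‖ ^ 2 + 2 * ⟪t • e, q⟫ := by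
  have h₄ : t * ⟪b, q⟫ ≤ 0 := mul_nonpos_of_nonneg_of_nonpos ht.le h₃
  have h₅ : 0 ≤ ‖t • (a - b - e) - w‖ ^ 2 := sq_nonneg _
  have h₆ : ⟪t • (a - b - e), w⟫ = t * ⟪a, w⟫ - t * ⟪b, w⟫ - t * ⟪e, w⟫ := by
    simp only [inner_sub_left, real_inner_smul_left]
    ring
  rw [norm_sub_sq_real, h₆] at h₅
  rw [norm_sub_sq_real, norm_sub_sq_real, real_inner_smul_left]
  simp only [inner_sub_left, inner_sub_right, inner_add_left, real_inner_smul_left,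
    real_inner_self_eq_norm_sq] at h₁ h₂
  linarith

lemma norm_add_sub_sq_le_three {E : Type*} [SeminormedAddCommGroup E] (p q r : E) :
    ‖p + q - r‖ ^ 2 ≤ 3 * (‖p‖ ^ 2 + ‖q‖ ^ 2 + ‖r‖ ^ 2) := by
  have h : ‖p + q - r‖ ≤ ‖p‖ + ‖q‖ + ‖r‖ :=
    (norm_sub_le _ _).trans (by gcongr; exact norm_add_le _ _)
  have h' : ‖p + q - r‖ ^ 2 ≤ (‖p‖ + ‖q‖ + ‖r‖) ^ 2 := by gcongr
  nlinarith [sq_nonneg (‖p‖ - ‖q‖), sq_nonneg (‖p‖ - ‖r‖), sq_nonneg (‖q‖ - ‖r‖)]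

/-- Key recursion in terms of ‖x_k − y_half‖ (inequality (16) of the paper). -/
theorem recursion_with_half_step {n : ℕ} (X : Set (EuclideanSpace ℝ (Fin n)))
    (hXne : X.Nonempty) (hXclosed : IsClosed X) (hXconv : Convex ℝ X)
    (P : EuclideanSpace ℝ (Fin n) → EuclideanSpace ℝ (Fin n))
    (hPmem : ∀ z, P z ∈ X)
    (hPchar : ∀ z, ∀ y ∈ X, ⟪z - P z, y - P z⟫ ≤ 0)
    (H : EuclideanSpace ℝ (Fin n) → EuclideanSpace ℝ (Fin n))
    (hpseudo : ∀ x ∈ X, ∀ y ∈ X, 0 ≤ ⟪H x, y - x⟫ → 0 ≤ ⟪H y, y - x⟫)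
    (xstar : EuclideanSpace ℝ (Fin n)) (hxstar : xstar ∈ X)
    (hsol : ∀ x ∈ X, 0 ≤ ⟪H xstar, x - xstar⟫)
    (γ μ t : ℝ) (hγ : 0 < γ) (hγ1 : γ ≤ 1)
    (hμ0 : 0 < μ) (hμ : μ < Real.sqrt 3 / 3)
    (ht0 : 0 < t) (htγ : t ≤ γ)
    (xk ε₁ ε₂ ε₃ : EuclideanSpace ℝ (Fin n))
    (yhalf ynext : EuclideanSpace ℝ (Fin n))
    (hyhalf : yhalf = P (xk - t • (H xk + ε₁)))
    (hynext : ynext = P (xk - t • (H yhalf + ε₂)))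
    (hls : t * ‖(H xk + ε₁) - (H yhalf + ε₃)‖ ≤ μ * ‖xk - yhalf‖) :
    ‖ynext - xstar‖ ^ 2 ≤ ‖xk - xstar‖ ^ 2
      - (1 - 3 * μ ^ 2) * ‖xk - yhalf‖ ^ 2
      + 3 * γ ^ 2 * ‖ε₂‖ ^ 2 + 3 * γ ^ 2 * ‖ε₃‖ ^ 2
      + 2 * ⟪t • ε₂, xstar - yhalf⟫ := by
  have hhalf : yhalf ∈ X := hyhalf ▸ hPmem _
  have hnext : ynext ∈ X := hynext ▸ hPmem _
  have h₁ := hPchar (xk - t • (H yhalf + ε₂)) xstar hxstar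
  rw [← hynext] at h₁
  have h₂ := hPchar (xk - t • (H xk + ε₁)) ynext hnext
  rw [← hyhalf] at h₂
  have h₃ := hpseudo xstar hxstar yhalf hhalf (hsol yhalf hhalf)
  have core := extragradient_core (xk - yhalf) (ynext - yhalf) (xstar - yhalf)
    (H xk + ε₁) (H yhalf) ε₂ t ht0
    (by convert h₁ using 2 <;> abel)
    (by convert h₂ using 2; abel)
    (by rw [← neg_sub, inner_neg_right]; linarith)
  rw [sub_sub_sub_cancel_right, sub_sub_sub_cancel_right] at core
  have hv : t • (H xk + ε₁ - H yhalf - ε₂)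
      = t • ((H xk + ε₁) - (H yhalf + ε₃)) + t • ε₃ - t • ε₂ := by module
  have h3 := norm_add_sub_sq_le_three (t • ((H xk + ε₁) - (H yhalf + ε₃))) (t • ε₃) (t • ε₂)
  rw [← hv] at h3
  have hls2 : ‖t • ((H xk + ε₁) - (H yhalf + ε₃))‖ ^ 2 ≤ μ ^ 2 * ‖xk - yhalf‖ ^ 2 := by
    rw [norm_smul, Real.norm_of_nonneg ht0.le, ← mul_pow]
    gcongr
  have herr : ∀ ε : EuclideanSpace ℝ (Fin n), ‖t • ε‖ ^ 2 ≤ γ ^ 2 * ‖ε‖ ^ 2 := by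
    intro ε
    rw [norm_smul, Real.norm_of_nonneg ht0.le, mul_pow]
    gcongr
  linarith [herr ε₂, herr ε₃]
end

section
/- Let X be a nonempty closed convex subset of ℝ^n, H : ℝ^n → ℝ^n a map, γ > 0, t ∈ (0, γ], and let x, ε₁ ∈ ℝ^n. Define y_half := P_X(x − t(H(x) + ε₁)) and r_γ(x) := ‖P_X(x − γ H(x)) − x‖. Then ‖x − y_half‖² ≥ (t² / (2γ²)) · r_γ(x)² − γ² ‖ε₁‖². -/
open scoped RealInnerProductSpace

/-!
Write `h = H x`, `a = P (x - γ h)` and `b = P (x - t h)`. The scaled residual `‖x - P (x - s h)‖ / s`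
is nonincreasing in `s` (`mul_norm_sub_le_of_proj`), so `t ‖x - a‖ ≤ γ ‖x - b‖`; this does not need
`x ∈ X`. Nonexpansiveness of the projection (`norm_proj_sub_proj_le`) gives
`‖b - yhalf‖ ≤ t ‖ε₁‖ ≤ γ ‖ε₁‖`, and the claim follows from
`‖x - b‖² ≤ 2 ‖x - yhalf‖² + 2 ‖b - yhalf‖²`.
-/

/-- Nonexpansiveness of the projection, from the variational inequalities at its two values:
`p` and `q` play the roles of the projections of `z` and `w`. -/
lemma norm_proj_sub_proj_le {E : Type*} [NormedAddCommGroup E] [InnerProductSpace ℝ E]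
    {z w p q : E} (hp : ⟪z - p, q - p⟫ ≤ 0) (hq : ⟪w - q, p - q⟫ ≤ 0) :
    ‖p - q‖ ≤ ‖z - w‖ := by
  have key : ‖p - q‖ ^ 2 ≤ ⟪z - w, p - q⟫ := by
    rw [← real_inner_self_eq_norm_sq]
    simp only [inner_sub_left, inner_sub_right] at *
    linarith
  have hcs := real_inner_le_norm (z - w) (p - q)
  by_contra! hlt
  nlinarith [norm_nonneg (z - w), norm_nonneg (p - q)]

/-- Monotonicity of the scaled residual: `a` and `b` play the roles of the projections of
`x - γ • h` and `x - t • h`. -/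
lemma mul_norm_sub_le_of_proj {E : Type*} [NormedAddCommGroup E] [InnerProductSpace ℝ E]
    {x h a b : E} {γ t : ℝ} (ht : 0 < t) (htγ : t ≤ γ)
    (ha : ⟪x - γ • h - a, b - a⟫ ≤ 0) (hb : ⟪x - t • h - b, a - b⟫ ≤ 0) :
    t * ‖x - a‖ ≤ γ * ‖x - b‖ := by
  -- Weighting the two inequalities by `t` and `γ` cancels the terms in `h`.
  have key : t * ‖x - a‖ ^ 2 + γ * ‖x - b‖ ^ 2 ≤ (t + γ) * ⟪x - a, x - b⟫ := by
    have h1 := mul_nonpos_of_nonneg_of_nonpos ht.le ha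
    have h2 := mul_nonpos_of_nonneg_of_nonpos (ht.le.trans htγ) hb
    rw [← real_inner_self_eq_norm_sq, ← real_inner_self_eq_norm_sq]
    simp only [inner_sub_left, inner_sub_right, real_inner_smul_left] at *
    rw [real_inner_comm x a, real_inner_comm x b, real_inner_comm a b] at *
    linarith
  have hcs := mul_le_mul_of_nonneg_left (real_inner_le_norm (x - a) (x - b))
    (by linarith : 0 ≤ t + γ)
  have hfac : (t * ‖x - a‖ - γ * ‖x - b‖) * (‖x - a‖ - ‖x - b‖) ≤ 0 := by linarith
  by_contra! hlt
  -- Here `‖x - a‖ ≤ ‖x - b‖`, which together with `t ≤ γ` contradicts `hlt`.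
  have hle : ‖x - a‖ - ‖x - b‖ ≤ 0 := nonpos_of_mul_nonpos_right hfac (by linarith)
  nlinarith [norm_nonneg (x - b)]

/-- Lower bound for ‖x − y_half‖² in terms of the residual function. -/
theorem half_step_residual_lower_bound {n : ℕ} (X : Set (EuclideanSpace ℝ (Fin n)))
    (hXne : X.Nonempty) (hXclosed : IsClosed X) (hXconv : Convex ℝ X)
    (P : EuclideanSpace ℝ (Fin n) → EuclideanSpace ℝ (Fin n))
    (hPmem : ∀ z, P z ∈ X)
    (hPchar : ∀ z, ∀ y ∈ X, ⟪z - P z, y - P z⟫ ≤ 0)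
    (H : EuclideanSpace ℝ (Fin n) → EuclideanSpace ℝ (Fin n))
    (γ t : ℝ) (hγ : 0 < γ) (ht0 : 0 < t) (htγ : t ≤ γ)
    (x ε₁ : EuclideanSpace ℝ (Fin n))
    (yhalf : EuclideanSpace ℝ (Fin n))
    (hyhalf : yhalf = P (x - t • (H x + ε₁))) :
    (t ^ 2 / (2 * γ ^ 2)) * ‖P (x - γ • H x) - x‖ ^ 2 - γ ^ 2 * ‖ε₁‖ ^ 2 ≤
      ‖x - yhalf‖ ^ 2 := by
  subst hyhalf
  set a := P (x - γ • H x)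
  set b := P (x - t • H x)
  set y := P (x - t • (H x + ε₁))
  have h1 : t * ‖x - a‖ ≤ γ * ‖x - b‖ :=
    mul_norm_sub_le_of_proj ht0 htγ (hPchar _ b (hPmem _)) (hPchar _ a (hPmem _))
  have h2 : ‖y - b‖ ≤ γ * ‖ε₁‖ := by
    have h := norm_proj_sub_proj_le (hPchar (x - t • (H x + ε₁)) b (hPmem _))
      (hPchar (x - t • H x) y (hPmem _))
    have e : x - t • (H x + ε₁) - (x - t • H x) = -(t • ε₁) := by
      rw [smul_add]; abel
    rw [e, norm_neg, norm_smul, Real.norm_of_nonneg ht0.le] at h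
    exact h.trans (mul_le_mul_of_nonneg_right htγ (norm_nonneg _))
  have h3 : ‖x - b‖ ≤ ‖x - y‖ + ‖y - b‖ := norm_sub_le_norm_sub_add_norm_sub x y b
  have h4 : ‖x - b‖ ^ 2 ≤ 2 * ‖x - y‖ ^ 2 + 2 * (γ * ‖ε₁‖) ^ 2 := by
    have := pow_le_pow_left₀ (norm_nonneg _) (h3.trans (add_le_add_right h2 _)) 2
    nlinarith [sq_nonneg (‖x - y‖ - γ * ‖ε₁‖)]
  have h5 : (t * ‖x - a‖) ^ 2 ≤ (γ * ‖x - b‖) ^ 2 :=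
    pow_le_pow_left₀ (by positivity) h1 2
  have h6 : t ^ 2 / (2 * γ ^ 2) * ‖a - x‖ ^ 2 ≤ ‖x - b‖ ^ 2 / 2 := by
    rw [norm_sub_rev a x, div_mul_eq_mul_div, div_le_iff₀ (by positivity)]
    linarith
  linarith
end

section
/- Let X be a nonempty closed convex subset of ℝ^n and H : ℝ^n → ℝ^n a map that is pseudomonotone on X. Let x* ∈ X satisfy ⟨H(x*), x − x*⟩ ≥ 0 for all x ∈ X. Let γ ∈ (0,1], μ ∈ (0, √3/3), t ∈ (0, γ], ν ≥ 0, τ > 1/2, M > 0, i ∈ ℕ with i ≥ 1, and let x_k, ε₁, ε₂, ε₃ ∈ ℝ^n. Define y_half := P_X(x_k − t(H(x_k) + ε₁)), y_next := P_X(x_k − t(H(y_half) + ε₂)), F := y_half − x_k, F̃ := y_next − x_k, and assume the line-search condition t‖(H(x_k) + ε₁) − (H(y_half) + ε₃)‖ ≤ μ‖x_k − y_half‖. Assume ‖F̃‖ < min{‖F‖, ν(1+i)^{-τ}}, set α := ⟨F̃, F̃ − F⟩/‖F̃ − F‖², assume |α| ≤ M, and set x_{k+1} := α x_k + (1 − α)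 y_next. Then, with r_γ(x_k) := ‖P_X(x_k − γ H(x_k)) − x_k‖, for every β̂ ∈ (0, 1/2]: ‖x_{k+1} − x*‖² ≤ ‖x_k − x*‖² − ((1 − 3μ²) β̂ t² / (2γ²)) r_γ(x_k)² + (1 − 3μ²)(M+1) γ² ‖ε₁‖² + 3γ²(M+1)‖ε₂‖² + 3γ²(M+1)‖ε₃‖² + 2(M+1)|⟨x* − y_half, t ε₂⟩| + M(M+1) ν² (1+i)^{-2τ}. -/
/-!
Write `x = xk`, `y = yhalf`, `z = ynext`, `x⋆ = xstar`. The proof combines four estimates.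

* Inexact extragradient estimate (`extragradient_estimate`): the obtuse-angle property of the two
  projections, `⟪H y, y - x⋆⟫ ≥ 0` (pseudomonotonicity) and the line search give
  `‖z - x⋆‖² ≤ ‖x - x⋆‖² - (1 - 3μ²)‖x - y‖² + errors in ε₂, ε₃`.
* Comparison of residuals (`residual_le`): `t ↦ ‖P (x - t h) - x‖ / t` is nonincreasing, and `P` is
  nonexpansive, so `(t² / γ²) r_γ(x)² / 2 ≤ ‖x - y‖² + t²‖ε₁‖²`. No membership `x ∈ X` is needed.
* Mixing weight (`mixing_weight_lt_half`): `‖F̃‖ < ‖F‖` forces `α < 1/2`, hence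
  `1/2 < 1 - α ≤ M + 1`.
* Affine combinations (`norm_sq_mix`):
  `‖αx + (1-α)z - x⋆‖² = α‖x - x⋆‖² + (1-α)‖z - x⋆‖² - α(1-α)‖z - x‖²`,
  whose last term is at most `M(M+1)‖F̃‖²`.
-/

open scoped RealInnerProductSpace

section Helpers

variable {E : Type*} [NormedAddCommGroup E] [InnerProductSpace ℝ E]

lemma norm_sq_mix (α : ℝ) (x z s : E) :
    ‖α • x + (1 - α) • z - s‖ ^ 2
      = α * ‖x - s‖ ^ 2 + (1 - α) * ‖z - s‖ ^ 2 - α * (1 - α) * ‖z - x‖ ^ 2 := by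
  have h1 : α • x + (1 - α) • z - s = α • (x - s) + (1 - α) • (z - s) := by module
  have h2 : z - x = (z - s) - (x - s) := by abel
  rw [h1, h2]
  generalize x - s = a
  generalize z - s = b
  rw [norm_add_sq_real, norm_sub_sq_real, norm_smul, norm_smul, mul_pow, mul_pow,
    real_inner_smul_left, real_inner_smul_right, real_inner_comm b a]
  simp only [Real.norm_eq_abs, sq_abs]
  ring

lemma norm_sq_add_three_le (a b c : E) :
    ‖a + b - c‖ ^ 2 ≤ 3 * ‖a‖ ^ 2 + 3 * ‖b‖ ^ 2 + 3 * ‖c‖ ^ 2 := by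
  have h : ‖a + b - c‖ ≤ ‖a‖ + ‖b‖ + ‖c‖ :=
    (norm_sub_le _ _).trans (by linarith [norm_add_le a b])
  nlinarith [norm_nonneg (a + b - c), norm_nonneg a, norm_nonneg b, norm_nonneg c,
    sq_nonneg (‖a‖ - ‖b‖), sq_nonneg (‖a‖ - ‖c‖), sq_nonneg (‖b‖ - ‖c‖)]

/-- The minimizer `α` of `‖G - α(G - F)‖` is below `1/2` when `G` is the shorter of the
two residuals. -/
lemma mixing_weight_lt_half (F G : E) (h : ‖G‖ < ‖F‖) :
    ⟪G, G - F⟫ / ‖G - F‖ ^ 2 < 1 / 2 := by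
  have hne : G - F ≠ 0 := by
    intro h0
    rw [sub_eq_zero.mp h0] at h
    exact lt_irrefl _ h
  have hpos : 0 < ‖G - F‖ ^ 2 := by positivity
  rw [div_lt_iff₀ hpos, norm_sub_sq_real, inner_sub_right, real_inner_self_eq_norm_sq]
  nlinarith [norm_nonneg G, norm_nonneg F]

/-- The map `t ↦ ‖P (x - t h) - x‖ / t` is nonincreasing on `t > 0`. Adding `γ` and `t` times the
two variational inequalities gives `(γ‖u‖ - t‖v‖)(‖u‖ - ‖v‖) ≤ 0` for the residuals
`u`, `v` at step sizes `t`, `γ`. -/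
lemma residual_scaling (X : Set E) (P : E → E) (hPmem : ∀ z, P z ∈ X)
    (hPchar : ∀ z, ∀ y ∈ X, ⟪z - P z, y - P z⟫ ≤ 0) (x h : E) {t γ : ℝ} (ht : 0 < t)
    (htγ : t ≤ γ) :
    t * ‖P (x - γ • h) - x‖ ≤ γ * ‖P (x - t • h) - x‖ := by
  have h1 := hPchar (x - t • h) _ (hPmem (x - γ • h))
  have h2 := hPchar (x - γ • h) _ (hPmem (x - t • h))
  generalize P (x - t • h) = a at *
  generalize P (x - γ • h) = b at *
  obtain ⟨u, rfl⟩ : ∃ u, a = x + u := ⟨a - x, by abel⟩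
  obtain ⟨v, rfl⟩ : ∃ v, b = x + v := ⟨b - x, by abel⟩
  rw [show x - t • h - (x + u) = -(t • h + u) by abel,
    show x + v - (x + u) = v - u by abel] at h1
  rw [show x - γ • h - (x + v) = -(γ • h + v) by abel,
    show x + u - (x + v) = u - v by abel] at h2
  simp only [add_sub_cancel_left]
  simp only [inner_neg_left, inner_add_left, inner_sub_right, real_inner_smul_left,
    real_inner_self_eq_norm_sq] at h1 h2
  rw [real_inner_comm u v] at h2
  have hcs := real_inner_le_norm u v
  have hu := norm_nonneg u
  have hv := norm_nonneg v
  have hγ : 0 < γ := ht.trans_le htγ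
  have key : (γ * ‖u‖ - t * ‖v‖) * (‖u‖ - ‖v‖) ≤ 0 := by
    have e1 := mul_le_mul_of_nonneg_left h1 hγ.le
    have e2 := mul_le_mul_of_nonneg_left h2 ht.le
    have e3 := mul_le_mul_of_nonneg_left hcs (by linarith : 0 ≤ γ + t)
    linarith
  by_contra! hlt
  -- A failure would give `γ‖u‖ < t‖v‖ ≤ γ‖v‖`, so both factors in `key` would be negative.
  have huv : ‖u‖ < ‖v‖ := by
    by_contra! hle
    nlinarith [mul_le_mul htγ hle hv hγ.le]
  nlinarith [mul_pos (sub_pos.mpr hlt) (sub_pos.mpr huv)]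

lemma projection_nonexpansive (X : Set E) (P : E → E) (hPmem : ∀ z, P z ∈ X)
    (hPchar : ∀ z, ∀ y ∈ X, ⟪z - P z, y - P z⟫ ≤ 0) (a b : E) :
    ‖P a - P b‖ ≤ ‖a - b‖ := by
  have h1 := hPchar a _ (hPmem b)
  have h2 := hPchar b _ (hPmem a)
  have h3 : ‖P a - P b‖ ^ 2 ≤ ⟪a - b, P a - P b⟫ := by
    rw [← real_inner_self_eq_norm_sq]
    simp only [inner_sub_left, inner_sub_right] at *
    linarith
  have h4 := real_inner_le_norm (a - b) (P a - P b)
  by_contra! hlt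
  nlinarith [norm_nonneg (a - b), norm_nonneg (P a - P b)]

/-- The exact residual at step size `γ` is controlled by the inexact residual at step size
`t ≤ γ`. -/
lemma residual_le (X : Set E) (P : E → E) (hPmem : ∀ z, P z ∈ X)
    (hPchar : ∀ z, ∀ y ∈ X, ⟪z - P z, y - P z⟫ ≤ 0) (x h e : E) {t γ : ℝ} (ht : 0 < t)
    (htγ : t ≤ γ) :
    t ^ 2 / (2 * γ ^ 2) * ‖P (x - γ • h) - x‖ ^ 2
      ≤ ‖x - P (x - t • (h + e))‖ ^ 2 + t ^ 2 * ‖e‖ ^ 2 := by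
  have hγ : 0 < γ := ht.trans_le htγ
  have h1 := residual_scaling X P hPmem hPchar x h ht htγ
  have h2 := projection_nonexpansive X P hPmem hPchar (x - t • h) (x - t • (h + e))
  rw [show x - t • h - (x - t • (h + e)) = t • e by module, norm_smul,
    Real.norm_of_nonneg ht.le] at h2
  have h3 : ‖P (x - t • h) - x‖ ≤ ‖x - P (x - t • (h + e))‖ + t * ‖e‖ := by
    have := norm_sub_le_norm_sub_add_norm_sub (P (x - t • h)) (P (x - t • (h + e))) x
    rw [norm_sub_rev (P (x - t • (h + e))) x] at this
    linarith
  generalize ‖x - P (x - t • (h + e))‖ = A at *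
  have h4 : t * ‖P (x - γ • h) - x‖ ≤ γ * (A + t * ‖e‖) :=
    h1.trans (mul_le_mul_of_nonneg_left h3 hγ.le)
  have h5 := pow_le_pow_left₀ (by positivity) h4 2
  rw [div_mul_eq_mul_div, div_le_iff₀ (by positivity)]
  nlinarith [mul_nonneg (sq_nonneg γ) (sq_nonneg (A - t * ‖e‖))]

/-- One inexact extragradient step with base point `x`, predictor direction `g`, corrector
direction `k + e₂` (where `⟪k, y - s⟫ ≥ 0`) and line-search error `e₃`. -/
lemma extragradient_estimate (x y z s g k e₂ e₃ : E) {t μ : ℝ} (ht : 0 < t)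
    (hy : ⟪x - t • g - y, z - y⟫ ≤ 0)
    (hz : ⟪x - t • (k + e₂) - z, s - z⟫ ≤ 0)
    (hk : 0 ≤ ⟪k, y - s⟫)
    (hls : t * ‖g - (k + e₃)‖ ≤ μ * ‖x - y‖) :
    ‖z - s‖ ^ 2 ≤ ‖x - s‖ ^ 2 - (1 - 3 * μ ^ 2) * ‖x - y‖ ^ 2
      + 3 * t ^ 2 * ‖e₂‖ ^ 2 + 3 * t ^ 2 * ‖e₃‖ ^ 2 + 2 * |⟪s - y, t • e₂⟫| := by
  -- `d` is the total discrepancy between the predictor and corrector directions.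
  set d := (g - (k + e₃)) + e₃ - e₂ with hd
  have hd3 := norm_sq_add_three_le (g - (k + e₃)) e₃ e₂
  rw [← hd] at hd3
  have hls2 := pow_le_pow_left₀ (by positivity) hls 2
  have htd : t ^ 2 * ‖d‖ ^ 2
      ≤ 3 * μ ^ 2 * ‖x - y‖ ^ 2 + 3 * t ^ 2 * ‖e₂‖ ^ 2 + 3 * t ^ 2 * ‖e₃‖ ^ 2 := by
    have := mul_le_mul_of_nonneg_left hd3 (sq_nonneg t)
    nlinarith
  have hyoung : 2 * (t * ⟪d, z - y⟫) ≤ t ^ 2 * ‖d‖ ^ 2 + ‖z - y‖ ^ 2 := by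
    have h0 := sq_nonneg ‖t • d - (z - y)‖
    rw [norm_sub_sq_real, norm_smul, mul_pow, Real.norm_of_nonneg ht.le,
      real_inner_smul_left] at h0
    linarith
  have habs := le_abs_self ⟪s - y, t • e₂⟫
  have htk := mul_nonneg ht.le hk
  have hid : ‖z - s‖ ^ 2 = ‖x - s‖ ^ 2 - ‖x - y‖ ^ 2 - ‖z - y‖ ^ 2
      + 2 * (t * ⟪d, z - y⟫) + 2 * ⟪x - t • g - y, z - y⟫
      + 2 * ⟪x - t • (k + e₂) - z, s - z⟫ - 2 * (t * ⟪k, y - s⟫)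
      + 2 * ⟪s - y, t • e₂⟫ := by
    have hd' : d = g - k - e₂ := by rw [hd]; abel
    rw [hd']
    simp only [← real_inner_self_eq_norm_sq, inner_sub_left, inner_sub_right, inner_add_left,
      real_inner_smul_left, real_inner_smul_right]
    rw [real_inner_comm s z, real_inner_comm s x, real_inner_comm y x, real_inner_comm y z,
      real_inner_comm s e₂, real_inner_comm y e₂]
    ring
  linarith

end Helpers

/-- Recursion for the Anderson-accelerated step (case k ∈ K_SAA of
Lemma 6 of the paper). -/
theorem anderson_step_recursion {n : ℕ} (X : Set (EuclideanSpace ℝ (Fin n)))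
    (hXne : X.Nonempty) (hXclosed : IsClosed X) (hXconv : Convex ℝ X)
    (P : EuclideanSpace ℝ (Fin n) → EuclideanSpace ℝ (Fin n))
    (hPmem : ∀ z, P z ∈ X)
    (hPchar : ∀ z, ∀ y ∈ X, ⟪z - P z, y - P z⟫ ≤ 0)
    (H : EuclideanSpace ℝ (Fin n) → EuclideanSpace ℝ (Fin n))
    (hpseudo : ∀ x ∈ X, ∀ y ∈ X, 0 ≤ ⟪H x, y - x⟫ → 0 ≤ ⟪H y, y - x⟫)
    (xstar : EuclideanSpace ℝ (Fin n)) (hxstar : xstar ∈ X)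
    (hsol : ∀ x ∈ X, 0 ≤ ⟪H xstar, x - xstar⟫)
    (γ μ t ν τ M : ℝ) (hγ : 0 < γ) (hγ1 : γ ≤ 1)
    (hμ0 : 0 < μ) (hμ : μ < Real.sqrt 3 / 3)
    (ht0 : 0 < t) (htγ : t ≤ γ)
    (hν : 0 ≤ ν) (hτ : 1 / 2 < τ) (hM : 0 < M)
    (i : ℕ) (hi : 1 ≤ i)
    (xk ε₁ ε₂ ε₃ : EuclideanSpace ℝ (Fin n))
    (yhalf ynext : EuclideanSpace ℝ (Fin n))
    (hyhalf : yhalf = P (xk - t • (H xk + ε₁)))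
    (hynext : ynext = P (xk - t • (H yhalf + ε₂)))
    (F Ftilde : EuclideanSpace ℝ (Fin n))
    (hF : F = yhalf - xk) (hFtilde : Ftilde = ynext - xk)
    (hls : t * ‖(H xk + ε₁) - (H yhalf + ε₃)‖ ≤ μ * ‖xk - yhalf‖)
    (hsmall : ‖Ftilde‖ < min ‖F‖ (ν * ((1 : ℝ) + (i : ℝ)) ^ (-τ)))
    (α : ℝ) (hα : α = ⟪Ftilde, Ftilde - F⟫ / ‖Ftilde - F‖ ^ 2)
    (hαM : |α| ≤ M)
    (xnext : EuclideanSpace ℝ (Fin n))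
    (hxnext : xnext = α • xk + (1 - α) • ynext) :
    ∀ β : ℝ, 0 < β → β ≤ 1 / 2 →
      ‖xnext - xstar‖ ^ 2 ≤ ‖xk - xstar‖ ^ 2
        - ((1 - 3 * μ ^ 2) * β * t ^ 2 / (2 * γ ^ 2)) * ‖P (xk - γ • H xk) - xk‖ ^ 2
        + (1 - 3 * μ ^ 2) * (M + 1) * γ ^ 2 * ‖ε₁‖ ^ 2
        + 3 * γ ^ 2 * (M + 1) * ‖ε₂‖ ^ 2
        + 3 * γ ^ 2 * (M + 1) * ‖ε₃‖ ^ 2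
        + 2 * (M + 1) * |⟪xstar - yhalf, t • ε₂⟫|
        + M * (M + 1) * ν ^ 2 * ((1 : ℝ) + (i : ℝ)) ^ (-(2 * τ)) := by
  intro β hβ0 hβ
  have hyX : yhalf ∈ X := hyhalf ▸ hPmem _
  have hzX : ynext ∈ X := hynext ▸ hPmem _
  have hy := hPchar (xk - t • (H xk + ε₁)) ynext hzX
  have hz := hPchar (xk - t • (H yhalf + ε₂)) xstar hxstar
  rw [← hyhalf] at hy
  rw [← hynext] at hz
  have hstep := extragradient_estimate xk yhalf ynext xstar (H xk + ε₁) (H yhalf) ε₂ ε₃ ht0 hy hz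
    (hpseudo xstar hxstar yhalf hyX (hsol yhalf hyX)) hls
  have hres := residual_le X P hPmem hPchar xk (H xk) ε₁ ht0 htγ
  rw [← hyhalf] at hres
  have hα2 : α < 1 / 2 := hα ▸ mixing_weight_lt_half F Ftilde (hsmall.trans_le (min_le_left _ _))
  have hF2 : ‖ynext - xk‖ ^ 2 ≤ ν ^ 2 * ((1 : ℝ) + (i : ℝ)) ^ (-(2 * τ)) := by
    have hpow : ((1 : ℝ) + (i : ℝ)) ^ (-(2 * τ)) = (((1 : ℝ) + (i : ℝ)) ^ (-τ)) ^ 2 := by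
      rw [← Real.rpow_mul_natCast (by positivity)]
      congr 1
      push_cast
      ring
    rw [hpow, ← mul_pow, ← hFtilde]
    exact pow_le_pow_left₀ (norm_nonneg _) (hsmall.trans_le (min_le_right _ _)).le 2
  have hc : 0 ≤ 1 - 3 * μ ^ 2 := by
    have h3 : Real.sqrt 3 ^ 2 = 3 := Real.sq_sqrt (by norm_num)
    nlinarith [Real.sqrt_nonneg 3]
  have ht2 : t ^ 2 ≤ γ ^ 2 := pow_le_pow_left₀ ht0.le htγ 2
  have hw0 : 0 ≤ 1 - α := by linarith
  have hwβ : β ≤ 1 - α := by linarith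
  have hwM : 1 - α ≤ M + 1 := by linarith [neg_abs_le α]
  have hcross : -(α * (1 - α)) * ‖ynext - xk‖ ^ 2
      ≤ M * (M + 1) * ν ^ 2 * ((1 : ℝ) + (i : ℝ)) ^ (-(2 * τ)) := by
    have h1 : -(α * (1 - α)) ≤ M * (M + 1) := by
      rw [← neg_mul]
      exact (mul_le_mul_of_nonneg_right ((neg_le_abs α).trans hαM) hw0).trans
        (mul_le_mul_of_nonneg_left hwM hM.le)
    calc -(α * (1 - α)) * ‖ynext - xk‖ ^ 2
        ≤ M * (M + 1) * ‖ynext - xk‖ ^ 2 := mul_le_mul_of_nonneg_right h1 (sq_nonneg _)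
      _ ≤ M * (M + 1) * (ν ^ 2 * ((1 : ℝ) + (i : ℝ)) ^ (-(2 * τ))) :=
          mul_le_mul_of_nonneg_left hF2 (by positivity)
      _ = _ := by ring
  have hmain := mul_le_mul_of_nonneg_left hstep hw0
  -- The weight `1 - α` may be lowered to `β` on the descent term and raised to `M + 1` on errors.
  have hdesc : (1 - 3 * μ ^ 2) * β * t ^ 2 / (2 * γ ^ 2) * ‖P (xk - γ • H xk) - xk‖ ^ 2
      ≤ (1 - α) * ((1 - 3 * μ ^ 2) * ‖xk - yhalf‖ ^ 2)
        + (1 - 3 * μ ^ 2) * (M + 1) * γ ^ 2 * ‖ε₁‖ ^ 2 := by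
    calc _ = β * ((1 - 3 * μ ^ 2)
            * (t ^ 2 / (2 * γ ^ 2) * ‖P (xk - γ • H xk) - xk‖ ^ 2)) := by ring
      _ ≤ (1 - α) * ((1 - 3 * μ ^ 2)
            * (t ^ 2 / (2 * γ ^ 2) * ‖P (xk - γ • H xk) - xk‖ ^ 2)) :=
          mul_le_mul_of_nonneg_right hwβ (by positivity)
      _ ≤ (1 - α) * ((1 - 3 * μ ^ 2) * (‖xk - yhalf‖ ^ 2 + t ^ 2 * ‖ε₁‖ ^ 2)) := by gcongr
      _ = (1 - α) * ((1 - 3 * μ ^ 2) * ‖xk - yhalf‖ ^ 2)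
            + (1 - 3 * μ ^ 2) * (1 - α) * t ^ 2 * ‖ε₁‖ ^ 2 := by ring
      _ ≤ _ := by gcongr
  have herr (e : EuclideanSpace ℝ (Fin n)) :
      (1 - α) * (3 * t ^ 2 * ‖e‖ ^ 2) ≤ 3 * γ ^ 2 * (M + 1) * ‖e‖ ^ 2 := by
    calc _ ≤ (M + 1) * (3 * γ ^ 2 * ‖e‖ ^ 2) := by gcongr
      _ = _ := by ring
  have hinner : (1 - α) * (2 * |⟪xstar - yhalf, t • ε₂⟫|)
      ≤ 2 * (M + 1) * |⟪xstar - yhalf, t • ε₂⟫| := by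
    calc _ ≤ (M + 1) * (2 * |⟪xstar - yhalf, t • ε₂⟫|) := by gcongr
      _ = _ := by ring
  rw [hxnext, norm_sq_mix]
  linarith [herr ε₂, herr ε₃]
end

section
/- Let X be a nonempty closed convex subset of ℝ^n, H : ℝ^n → ℝ^n an L̄-Lipschitz map with L̄ ≥ 0, and let x* ∈ X satisfy ⟨H(x*), x − x*⟩ ≥ 0 for all x ∈ X. Let γ > 0, t ∈ (0, γ], x ∈ ℝ^n, ε ∈ ℝ^n, and set y := P_X(x − t(H(x) + ε)). Then ‖x* − y‖ ≤ (1 + γ L̄)‖x − x*‖ + γ‖ε‖. -/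
/-!
Put `d = x* - y`. Since `y` is the projection of `x - t (H x + ε)`, testing its variational
inequality at `x*`, and that of `x*` at `y`, gives `‖d‖² ≤ ⟪v, d⟫` with
`v = (x* - x) + t (H x - H x*) + t ε`. By Cauchy–Schwarz `‖d‖ ≤ ‖v‖`, and the triangle inequality
together with the Lipschitz bound and `t ≤ γ` finishes the proof.
-/

open scoped RealInnerProductSpace

/-- ‖x* − y‖ ≤ (1 + γ L̄)‖x − x*‖ + γ‖ε‖ for the perturbed projected step. -/
theorem perturbed_step_distance_bound {n : ℕ} (X : Set (EuclideanSpace ℝ (Fin n)))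
    (hXne : X.Nonempty) (hXclosed : IsClosed X) (hXconv : Convex ℝ X)
    (P : EuclideanSpace ℝ (Fin n) → EuclideanSpace ℝ (Fin n))
    (hPmem : ∀ z, P z ∈ X)
    (hPchar : ∀ z, ∀ y ∈ X, ⟪z - P z, y - P z⟫ ≤ 0)
    (H : EuclideanSpace ℝ (Fin n) → EuclideanSpace ℝ (Fin n))
    (Lbar : ℝ) (hLbar : 0 ≤ Lbar)
    (hHLip : ∀ u w, ‖H u - H w‖ ≤ Lbar * ‖u - w‖)
    (xstar : EuclideanSpace ℝ (Fin n)) (hxstar : xstar ∈ X)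
    (hsol : ∀ x ∈ X, 0 ≤ ⟪H xstar, x - xstar⟫)
    (γ t : ℝ) (hγ : 0 < γ) (ht0 : 0 < t) (htγ : t ≤ γ)
    (x ε : EuclideanSpace ℝ (Fin n))
    (y : EuclideanSpace ℝ (Fin n))
    (hy : y = P (x - t • (H x + ε))) :
    ‖xstar - y‖ ≤ (1 + γ * Lbar) * ‖x - xstar‖ + γ * ‖ε‖ := by
  have hyX : y ∈ X := hy ▸ hPmem _
  have h1 : ⟪x - t • (H x + ε) - y, xstar - y⟫ ≤ 0 := by
    rw [hy]
    exact hPchar _ _ hxstar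
  have h2 := mul_nonneg ht0.le (hsol y hyX)
  set v := (xstar - x) + t • (H x - H xstar) + t • ε with hv
  have h3 : ‖xstar - y‖ * ‖xstar - y‖ ≤ ⟪v, xstar - y⟫ := by
    have e : xstar - y = (x - t • (H x + ε) - y) + v + t • H xstar := by
      rw [hv]; module
    have e2 : ⟪xstar - y, xstar - y⟫ = ⟪x - t • (H x + ε) - y, xstar - y⟫
        + ⟪v, xstar - y⟫ + t * ⟪H xstar, xstar - y⟫ := by
      rw [← real_inner_smul_left, ← inner_add_left, ← inner_add_left, ← e]
    rw [← neg_sub xstar y, inner_neg_right] at h2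
    rw [← real_inner_self_eq_norm_mul_norm]
    linarith
  have h4 : ‖xstar - y‖ ≤ ‖v‖ := by
    have h5 := h3.trans (real_inner_le_norm _ _)
    rcases (norm_nonneg (xstar - y)).eq_or_lt with h0 | h0
    · rw [← h0]; exact norm_nonneg _
    · exact le_of_mul_le_mul_right h5 h0
  have h6 : ‖v‖ ≤ ‖xstar - x‖ + t * ‖H x - H xstar‖ + t * ‖ε‖ := by
    refine (norm_add₃_le).trans_eq ?_
    rw [norm_smul, norm_smul, Real.norm_of_nonneg ht0.le]
  have h7 : t * ‖H x - H xstar‖ ≤ γ * (Lbar * ‖x - xstar‖) :=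
    mul_le_mul htγ (hHLip x xstar) (norm_nonneg _) hγ.le
  have h8 : t * ‖ε‖ ≤ γ * ‖ε‖ := mul_le_mul_of_nonneg_right htγ (norm_nonneg _)
  rw [norm_sub_rev xstar x] at h6
  linarith
end

section
/- Let (d_k)_{k∈ℕ}, (s_k)_{k∈ℕ}, (r_k)_{k∈ℕ} be sequences of nonnegative real numbers, Q > 0, P > 0, k₀ ∈ ℕ, φ ∈ (0,1), and ψ > 0. Suppose that d_{k+1} ≤ (1 + Q s_k) d_k + P s_k + r_k for all k ≥ k₀, that ∑_{k=k₀}^∞ s_k < φ/Q, and that ∑_{k=k₀}^∞ r_k < ψ. Then sup_{k ≥ k₀} d_k ≤ (d_{k₀} + P·φ/Q + ψ)/(1 − φ). -/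
/-!
Write `B` for the claimed bound. It is the fixed point of `B = φ B + (d k₀ + P φ / Q + ψ)`.
As long as the terms stay below `B`, the recursion gives
`d (k + 1) ≤ d k + (Q B + P) s k + r k`, which telescopes to
`d (k₀ + n) ≤ d k₀ + (Q B + P) ∑_{i<n} s (k₀ + i) + ∑_{i<n} r (k₀ + i)`.
The partial sums are below `φ / Q` and `ψ`, so the right-hand side is at most `B` by the
fixed-point equation, and the induction on `n` closes.
-/

/-- Boundedness of a nonnegative sequence satisfying the perturbed
recursion d_{k+1} ≤ (1 + Q s_k) d_k + P s_k + r_k (Lemma 10 of the paper). -/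
theorem bounded_from_perturbed_recursion (d s r : ℕ → ℝ)
    (hd : ∀ k, 0 ≤ d k) (hs : ∀ k, 0 ≤ s k) (hr : ∀ k, 0 ≤ r k)
    (Q P : ℝ) (hQ : 0 < Q) (hP : 0 < P)
    (k₀ : ℕ) (φ ψ : ℝ) (hφ : φ ∈ Set.Ioo (0 : ℝ) 1) (hψ : 0 < ψ)
    (hrec : ∀ k, k₀ ≤ k → d (k + 1) ≤ (1 + Q * s k) * d k + P * s k + r k)
    (hssum : Summable (fun k => s (k₀ + k)))
    (hsbound : ∑' k : ℕ, s (k₀ + k) < φ / Q)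
    (hrsum : Summable (fun k => r (k₀ + k)))
    (hrbound : ∑' k : ℕ, r (k₀ + k) < ψ) :
    ∀ k, k₀ ≤ k → d k ≤ (d k₀ + P * (φ / Q) + ψ) / (1 - φ) := by
  obtain ⟨hφ0, hφ1⟩ := hφ
  have h1φ : 0 < 1 - φ := sub_pos.mpr hφ1
  set B := (d k₀ + P * (φ / Q) + ψ) / (1 - φ) with hB
  have hB0 : 0 ≤ B := by
    have := hd k₀
    positivity
  have hfix : d k₀ + (Q * B + P) * (φ / Q) + ψ = B := by
    have h1 : B * (1 - φ) = d k₀ + P * (φ / Q) + ψ := div_mul_cancel₀ _ h1φ.ne'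
    have h2 : Q * (φ / Q) = φ := mul_div_cancel₀ φ hQ.ne'
    linear_combination B * h2 - h1
  have hS : ∀ n, ∑ i ∈ Finset.range n, s (k₀ + i) ≤ φ / Q := fun n =>
    (hssum.sum_le_tsum _ fun i _ => hs _).trans hsbound.le
  have hR : ∀ n, ∑ i ∈ Finset.range n, r (k₀ + i) ≤ ψ := fun n =>
    (hrsum.sum_le_tsum _ fun i _ => hr _).trans hrbound.le
  have hle : ∀ n, d k₀ + (Q * B + P) * ∑ i ∈ Finset.range n, s (k₀ + i)
      + ∑ i ∈ Finset.range n, r (k₀ + i) ≤ B := fun n => by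
    have := mul_le_mul_of_nonneg_left (hS n) (by positivity : 0 ≤ Q * B + P)
    linarith [hR n]
  have key : ∀ n, d (k₀ + n) ≤ d k₀ + (Q * B + P) * ∑ i ∈ Finset.range n, s (k₀ + i)
      + ∑ i ∈ Finset.range n, r (k₀ + i) := fun n => by
    induction n with
    | zero => simp
    | succ n ih =>
      have hdB : d (k₀ + n) ≤ B := ih.trans (hle n)
      have hstep := hrec (k₀ + n) (Nat.le_add_right _ _)
      have hmul := mul_le_mul_of_nonneg_left hdB (mul_nonneg hQ.le (hs (k₀ + n)))
      rw [Finset.sum_range_succ, Finset.sum_range_succ, ← Nat.add_assoc]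
      linarith
  intro k hk
  obtain ⟨n, rfl⟩ := Nat.exists_eq_add_of_le hk
  exact (key n).trans (hle n)
end

section
/- Let (v_k), (u_k), (a_k), (b_k) be sequences of nonnegative real numbers satisfying v_{k+1} ≤ (1 + a_k)·v_k − u_k + b_k for all k ∈ ℕ. Suppose V, A, B ∈ ℝ are such that v_k ≤ V for all k, ∑_{k=0}^∞ a_k ≤ A, and ∑_{k=0}^∞ b_k ≤ B. Then for every N ∈ ℕ, min_{0 ≤ k ≤ N} u_k ≤ (v_0 + A·V + B)/(N + 1). -/
/-!
Summing the recursion over `0 ≤ k ≤ N` telescopes `v`, and `a k * v k ≤ a k * V` together with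
the bounds on the two series gives `∑ u k ≤ v 0 + A * V + B`. The smallest of the `N + 1` terms
is at most their average.
-/

/-- O(1/N) rate from the almost-supermartingale recursion:
min_{0 ≤ k ≤ N} u_k ≤ (v_0 + A·V + B)/(N+1). -/
theorem sublinear_rate_from_recursion (v u a b : ℕ → ℝ)
    (hv : ∀ k, 0 ≤ v k) (hu : ∀ k, 0 ≤ u k)
    (ha : ∀ k, 0 ≤ a k) (hb : ∀ k, 0 ≤ b k)
    (hrec : ∀ k, v (k + 1) ≤ (1 + a k) * v k - u k + b k)
    (V A B : ℝ) (hV : ∀ k, v k ≤ V)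
    (haSum : Summable a) (haBound : ∑' k, a k ≤ A)
    (hbSum : Summable b) (hbBound : ∑' k, b k ≤ B) :
    ∀ N : ℕ, ∃ k ≤ N, u k ≤ (v 0 + A * V + B) / (N + 1) := by
  intro N
  have hV0 : 0 ≤ V := (hv 0).trans (hV 0)
  -- Telescoping the recursion, with each `a k * v k` bounded by `a k * V`.
  have key : ∀ n : ℕ, v n + ∑ k ∈ Finset.range n, u k ≤
      v 0 + (∑ k ∈ Finset.range n, a k) * V + ∑ k ∈ Finset.range n, b k := by
    intro n
    induction n with
    | zero => simp
    | succ n ih =>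
      simp only [Finset.sum_range_succ]
      have h := mul_le_mul_of_nonneg_left (hV n) (ha n)
      linarith [hrec n]
  have hA : ∑ k ∈ Finset.range (N + 1), a k ≤ A :=
    (haSum.sum_le_tsum _ fun k _ => ha k).trans haBound
  have hB : ∑ k ∈ Finset.range (N + 1), b k ≤ B :=
    (hbSum.sum_le_tsum _ fun k _ => hb k).trans hbBound
  have hsum : ∑ k ∈ Finset.range (N + 1), u k ≤ v 0 + A * V + B := by
    linarith [key (N + 1), hv (N + 1), mul_le_mul_of_nonneg_right hA hV0]
  -- Some term of a finite sum is at most the average.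
  obtain ⟨k, hk, hle⟩ := Finset.exists_le_of_sum_le (s := Finset.range (N + 1)) (f := u)
    (g := fun _ => (v 0 + A * V + B) / ((N : ℝ) + 1)) ⟨0, by simp⟩ (by
      have hN : (N : ℝ) + 1 ≠ 0 := by positivity
      rw [Finset.sum_const, Finset.card_range, nsmul_eq_mul]
      push_cast
      rwa [mul_div_cancel₀ _ hN])
  exact ⟨k, Nat.lt_succ_iff.mp (Finset.mem_range.mp hk), hle⟩
end
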